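/- Let α, β, c ∈ (1,∞), T ∈ (0,∞), let (Ω, 𝓕, (𝓕_t)_{t∈[0,T]}, P) be a filtered probability space, let W : [0,T]×Ω → ℝ be a standard (𝓕_t)-Brownian motion, let ξ : Ω → ℝ be 𝓕_0/Borel-measurable, let μ, σ : ℝ → ℝ be Borel-measurable, and for N ∈ ℕ = {1,2,3,...} let Y^N_n : Ω → ℝ, n ∈ {0,1,...,N}, satisfy Y^N_0 = ξ and Y^N_{n+1} = Y^N_n + (T/N)·μ(Y^N_n) + σ(Y^N_n)·(W_{(n+1)T/N} − W_{nT/N}) for n ∈ {0,1,...,N−1}. Assume that for all x ∈ (−∞,−c] ∪ [c,∞) it holds that |μ(x)| + |σ(x)| ≥ |x|^α / c, and assume that either P(σ(ξ) ≠ 0) > 0 or for all x ∈ [1,∞) it holds that P(|ξ| ≥ x) ≥ β^{(−x^β)}. Then for every p ∈ (0,∞) it holds that lim_{N→∞} E[|Y^N_N|^p] = ∞. -/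

import Mathlib

open MeasureTheory ProbabilityTheory Real
open scoped ENNReal

/-!
Above a threshold `r` of polynomial size in `N`, an increment of size at least `T / N` whose sign
agrees with that of (drift-shifted position) × (diffusion) turns `|x|` into at least
`|x| ^ ((α + 1) / 2)`. Such an increment has conditional probability bounded below by a constant
`q > 0`, so with probability at least `q ^ (N - 1) * P (r ≤ |Y₁|)` the final value exceeds
`2 ^ γ ^ (N - 1)` with `γ = (α + 1) / 2 > 1`. The initial condition makes `P (r ≤ |Y₁|)` at least
`exp (-poly N)`, and by Markov's inequality the doubly exponential size beats these probabilities.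
-/

section ExpPolyLowerBound

open Filter
open scoped Polynomial Topology

/-- The sequence `u` is eventually bounded below by `exp (-Q N)` for some polynomial `Q`. This is
the class of probabilities that a doubly exponential sequence outweighs. -/
def HasExpPolyLowerBound (u : ℕ → ℝ≥0∞) : Prop :=
  ∃ Q : ℝ[X], ∀ᶠ N : ℕ in atTop, ENNReal.ofReal (rexp (-Q.eval (N : ℝ))) ≤ u N

lemma exists_ofReal_exp_neg_le {a : ℝ≥0∞} (ha : a ≠ 0) :
    ∃ b : ℝ, ENNReal.ofReal (rexp (-b)) ≤ a := by
  obtain ⟨x, _, hxa⟩ := ENNReal.lt_iff_exists_real_btwn.1 (pos_iff_ne_zero.2 ha)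
  have hx0 : 0 < x := ENNReal.ofReal_pos.1 hxa.1
  exact ⟨-Real.log x, by rw [neg_neg, Real.exp_log hx0]; exact hxa.2.le⟩

lemma isLittleO_polynomial_eval_natCast_pow (Q : ℝ[X]) {γ : ℝ} (hγ : 1 < γ) :
    (fun N : ℕ => Q.eval (N : ℝ)) =o[atTop] fun N : ℕ => γ ^ N := by
  have hdeg : Q.degree ≤ (Polynomial.X ^ Q.natDegree : ℝ[X]).degree := by
    rw [Polynomial.degree_X_pow]
    exact Polynomial.degree_le_natDegree
  have hO := (Polynomial.isBigO_atTop_of_degree_le Q _ hdeg).comp_tendsto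
    tendsto_natCast_atTop_atTop
  simp only [Function.comp_def, Polynomial.eval_pow, Polynomial.eval_X] at hO
  exact hO.trans_isLittleO (isLittleO_pow_const_const_pow_of_one_lt Q.natDegree hγ)

namespace HasExpPolyLowerBound

variable {u v : ℕ → ℝ≥0∞}

lemma mono (hu : HasExpPolyLowerBound u) (huv : ∀ᶠ N in atTop, u N ≤ v N) :
    HasExpPolyLowerBound v := by
  obtain ⟨Q, hQ⟩ := hu
  exact ⟨Q, (hQ.and huv).mono fun _ h => h.1.trans h.2⟩

lemma mul (hu : HasExpPolyLowerBound u) (hv : HasExpPolyLowerBound v) :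
    HasExpPolyLowerBound fun N => u N * v N := by
  obtain ⟨Q, hQ⟩ := hu
  obtain ⟨R, hR⟩ := hv
  refine ⟨Q + R, (hQ.and hR).mono fun N h => ?_⟩
  rw [Polynomial.eval_add, neg_add, Real.exp_add, ENNReal.ofReal_mul (Real.exp_nonneg _)]
  exact mul_le_mul' h.1 h.2

lemma const {a : ℝ≥0∞} (ha : a ≠ 0) : HasExpPolyLowerBound fun _ => a := by
  obtain ⟨b, hb⟩ := exists_ofReal_exp_neg_le ha
  exact ⟨.C b, .of_forall fun N => by simpa using hb⟩

lemma pow_sub_one {a : ℝ≥0∞} (ha : a ≠ 0) : HasExpPolyLowerBound fun N => a ^ (N - 1) := by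
  obtain ⟨b, hb⟩ := exists_ofReal_exp_neg_le ha
  refine ⟨.C b * (.X - 1), (eventually_ge_atTop 1).mono fun N hN => ?_⟩
  calc ENNReal.ofReal (rexp (-(Polynomial.C b * (.X - 1)).eval (N : ℝ)))
      = ENNReal.ofReal (rexp (-b)) ^ (N - 1) := by
        rw [← ENNReal.ofReal_pow (Real.exp_nonneg _), ← Real.exp_nat_mul, Nat.cast_pred hN]
        congr 2
        simp
        ring
    _ ≤ a ^ (N - 1) := by gcongr

lemma tendsto_ofReal_exp_pow_mul (hu : HasExpPolyLowerBound u) {δ γ : ℝ} (hδ : 0 < δ)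
    (hγ : 1 < γ) :
    Tendsto (fun N : ℕ => ENNReal.ofReal (rexp (δ * γ ^ N)) * u N) atTop (𝓝 ⊤) := by
  obtain ⟨Q, hQ⟩ := hu
  have hpow : Tendsto (fun N : ℕ => δ * γ ^ N) atTop atTop :=
    (tendsto_pow_atTop_atTop_of_one_lt hγ).const_mul_atTop hδ
  have hexponent : Tendsto (fun N : ℕ => δ * γ ^ N - Q.eval (N : ℝ)) atTop atTop :=
    (Asymptotics.IsEquivalent.refl.sub_isLittleO
      ((isLittleO_polynomial_eval_natCast_pow Q hγ).const_mul_right hδ.ne')).symm.tendsto_atTop hpow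
  refine tendsto_nhds_top_mono
    (ENNReal.tendsto_ofReal_atTop.comp (Real.tendsto_exp_atTop.comp hexponent))
    (hQ.mono fun N hN => ?_)
  simp only [Function.comp_apply]
  rw [sub_eq_add_neg, Real.exp_add, ENNReal.ofReal_mul (Real.exp_nonneg _)]
  gcongr

end HasExpPolyLowerBound

lemma hasExpPolyLowerBound_measure_of_tail {Ω : Type*} [MeasurableSpace Ω] {P : Measure Ω}
    {ξ : Ω → ℝ} {β : ℝ} (hβ : 1 ≤ β)
    (htail : ∀ x : ℝ, 1 ≤ x → ENNReal.ofReal (β ^ (-(x ^ β))) ≤ P {ω | x ≤ |ξ ω|})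
    {r : ℕ → ℝ} (hr : ∀ᶠ N in atTop, 1 ≤ r N) {Q : ℝ[X]}
    (hrQ : ∀ᶠ N : ℕ in atTop, r N ≤ Q.eval (N : ℝ)) :
    HasExpPolyLowerBound fun N => P {ω | r N ≤ |ξ ω|} := by
  refine ⟨.C (Real.log β) * Q ^ ⌈β⌉₊, (hr.and hrQ).mono fun N ⟨h1, hQ⟩ => ?_⟩
  refine le_trans (ENNReal.ofReal_le_ofReal ?_) (htail (r N) h1)
  have hpow : r N ^ β ≤ Q.eval (N : ℝ) ^ ⌈β⌉₊ := calc
    r N ^ β ≤ r N ^ (⌈β⌉₊ : ℝ) := Real.rpow_le_rpow_of_exponent_le h1 (Nat.le_ceil β)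
    _ = r N ^ ⌈β⌉₊ := Real.rpow_natCast _ _
    _ ≤ Q.eval (N : ℝ) ^ ⌈β⌉₊ := by gcongr
  rw [Real.rpow_def_of_pos (by linarith), Real.exp_le_exp, mul_neg, neg_le_neg_iff,
    Polynomial.eval_mul, Polynomial.eval_C, Polynomial.eval_pow]
  exact mul_le_mul_of_nonneg_left hpow (Real.log_nonneg hβ)

end ExpPolyLowerBound

section GaussianTail

open scoped Polynomial

/-- A lower bound for the probability that a real Gaussian variable exceeds its mean by
`√z` standard deviations. -/
noncomputable def gaussianTailBound (z : ℝ) : ℝ≥0∞ :=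
  ENNReal.ofReal ((√(2 * π))⁻¹ * rexp (-(z + 1)))

lemma gaussianTailBound_ne_zero (z : ℝ) : gaussianTailBound z ≠ 0 :=
  (ENNReal.ofReal_pos.2 (by positivity)).ne'

lemma gaussianTailBound_antitone : Antitone gaussianTailBound := fun _ _ hyz => by
  unfold gaussianTailBound
  gcongr

lemma hasExpPolyLowerBound_gaussianTailBound_eval (Q : ℝ[X]) :
    HasExpPolyLowerBound fun N => gaussianTailBound (Q.eval (N : ℝ)) := by
  have hexp : HasExpPolyLowerBound fun N => ENNReal.ofReal (rexp (-(Q.eval (N : ℝ) + 1))) :=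
    ⟨Q + 1, .of_forall fun N => by simp⟩
  have hconst : ENNReal.ofReal (√(2 * π))⁻¹ ≠ 0 := (ENNReal.ofReal_pos.2 (by positivity)).ne'
  simpa only [gaussianTailBound, ← ENNReal.ofReal_mul (inv_nonneg.2 (Real.sqrt_nonneg _))]
    using (HasExpPolyLowerBound.const hconst).mul hexp

lemma gaussianTailBound_le_gaussianReal_Ici (m : ℝ) {v : NNReal} (hv : v ≠ 0) {y : ℝ}
    (hy : 0 ≤ y) : gaussianTailBound (y ^ 2 / v) ≤ gaussianReal m v (Set.Ici (m + y)) := by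
  have hv' : (0 : ℝ) < v := NNReal.coe_pos.2 (pos_iff_ne_zero.2 hv)
  have hdensity : ∀ x ∈ Set.Icc (m + y) (m + y + √v),
      ENNReal.ofReal ((√(2 * π * v))⁻¹ * rexp (-(y ^ 2 / v + 1))) ≤ gaussianPDF m v x := by
    rintro x ⟨hlo, hhi⟩
    have hsq : (x - m) ^ 2 ≤ 2 * y ^ 2 + 2 * v := calc
      (x - m) ^ 2 ≤ (y + √v) ^ 2 := by
        gcongr <;> linarith
      _ ≤ 2 * y ^ 2 + 2 * v := by
        nlinarith [sq_nonneg (y - √v), Real.sq_sqrt hv'.le]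
    rw [gaussianPDF, gaussianPDFReal, neg_div]
    gcongr
    rw [div_le_iff₀ (by positivity)]
    field_simp
    linarith
  rw [gaussianReal_apply m hv]
  calc gaussianTailBound (y ^ 2 / v)
      = ∫⁻ _ in Set.Icc (m + y) (m + y + √v),
          ENNReal.ofReal ((√(2 * π * v))⁻¹ * rexp (-(y ^ 2 / v + 1))) := by
        rw [setLIntegral_const, Real.volume_Icc, add_sub_cancel_left,
          ← ENNReal.ofReal_mul (by positivity), Real.sqrt_mul (by positivity), gaussianTailBound]
        congr 1
        field_simp
    _ ≤ ∫⁻ x in Set.Icc (m + y) (m + y + √v), gaussianPDF m v x :=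
        setLIntegral_mono' measurableSet_Icc hdensity
    _ ≤ ∫⁻ x in Set.Ici (m + y), gaussianPDF m v x := lintegral_mono_set Set.Icc_subset_Ici_self

lemma gaussianTailBound_le_gaussianReal_Iic (m : ℝ) {v : NNReal} (hv : v ≠ 0) {y : ℝ}
    (hy : 0 ≤ y) : gaussianTailBound (y ^ 2 / v) ≤ gaussianReal m v (Set.Iic (m - y)) := by
  have hreflect : gaussianReal (-m) v (Set.Ici (-m + y)) = gaussianReal m v (Set.Iic (m - y)) := by
    rw [← gaussianReal_map_neg, Measure.map_apply measurable_neg measurableSet_Ici]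
    congr 1
    ext x
    simp only [Set.mem_preimage, Set.mem_Ici, Set.mem_Iic]
    constructor <;> intro h <;> linarith
  exact hreflect ▸ gaussianTailBound_le_gaussianReal_Ici (-m) hv hy

end GaussianTail

lemma abs_add_abs_mul_le_abs_add_mul {a s d y : ℝ} (hsign : 0 ≤ a * (s * d)) (hd : y ≤ |d|) :
    |a| + |s| * y ≤ |a + s * d| := by
  have habs : |a + s * d| = |a| + |s * d| := abs_add_eq_add_abs_iff _ _ |>.2 <|
    mul_nonneg_iff.1 hsign
  rw [habs, abs_mul]
  gcongr

/-- The sign of `Δ` that pushes `a` away from zero is that of `a * s`, which is `m`-measurable, so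
independence applies on each of the two pieces into which this sign divides `A`. -/
lemma mul_measure_le_measure_abs_add_mul {Ω : Type*} {m mΩ : MeasurableSpace Ω} {P : Measure Ω}
    (hm : m ≤ mΩ) {Δ a s : Ω → ℝ} (hΔ : Measurable Δ)
    (hindep : Indep (MeasurableSpace.comap Δ inferInstance) m P)
    (ha : Measurable[m] a) (hs : Measurable[m] s) {A : Set Ω} (hA : MeasurableSet[m] A)
    {y : ℝ} (hy : 0 ≤ y) {κ : ℝ≥0∞} (hpos : κ ≤ P.map Δ (Set.Ici y))
    (hneg : κ ≤ P.map Δ (Set.Iic (-y))) :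
    κ * P A ≤ P {ω | ω ∈ A ∧ |a ω| + |s ω| * y ≤ |a ω + s ω * Δ ω|} := by
  have hpiece {S : Set ℝ} (hS : MeasurableSet S) (hκ : κ ≤ P.map Δ S) {C : Set Ω}
      (hC : MeasurableSet[m] C) : κ * P C ≤ P (Δ ⁻¹' S ∩ C) := by
    rw [(Indep_iff _ _ _).1 hindep _ C ⟨S, hS, rfl⟩ hC, ← Measure.map_apply hΔ hS]
    gcongr
  let B : Set Ω := {ω | 0 ≤ a ω * s ω}
  have hB : MeasurableSet[m] B := (ha.mul hs) measurableSet_Ici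
  have hdisj : Disjoint (Δ ⁻¹' Set.Ici y ∩ (A ∩ B)) (Δ ⁻¹' Set.Iic (-y) ∩ (A \ B)) :=
    Set.disjoint_sdiff_inter.symm.mono Set.inter_subset_right Set.inter_subset_right
  calc κ * P A = κ * P (A ∩ B) + κ * P (A \ B) := by
        rw [← mul_add, measure_inter_add_sdiff A (hm _ hB)]
    _ ≤ P (Δ ⁻¹' Set.Ici y ∩ (A ∩ B)) + P (Δ ⁻¹' Set.Iic (-y) ∩ (A \ B)) :=
        add_le_add (hpiece measurableSet_Ici hpos (hA.inter hB))
          (hpiece measurableSet_Iic hneg (hA.diff hB))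
    _ = P (Δ ⁻¹' Set.Ici y ∩ (A ∩ B) ∪ Δ ⁻¹' Set.Iic (-y) ∩ (A \ B)) :=
        (measure_union hdisj ((hΔ measurableSet_Iic).inter (hm _ (hA.diff hB)))).symm
    _ ≤ P {ω | ω ∈ A ∧ |a ω| + |s ω| * y ≤ |a ω + s ω * Δ ω|} := by
        refine measure_mono ?_
        rintro ω (⟨hω : y ≤ Δ ω, hωA, hωB : 0 ≤ a ω * s ω⟩ |
          ⟨hω : Δ ω ≤ -y, hωA, hωB : ¬0 ≤ a ω * s ω⟩)
        · refine ⟨hωA, abs_add_abs_mul_le_abs_add_mul ?_ (hω.trans (le_abs_self _))⟩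
          exact mul_assoc (a ω) _ _ ▸ mul_nonneg hωB (hy.trans hω)
        · refine ⟨hωA, abs_add_abs_mul_le_abs_add_mul ?_ (le_abs'.2 (.inl hω))⟩
          exact mul_assoc (a ω) _ _ ▸
            mul_nonneg_of_nonpos_of_nonpos (not_le.1 hωB).le (by linarith)

lemma ofReal_rpow_mul_measure_le_lintegral_abs_rpow {Ω : Type*} {mΩ : MeasurableSpace Ω}
    {P : Measure Ω} {f : Ω → ℝ} (hf : AEMeasurable f P) {a p : ℝ} (ha : 0 ≤ a)
    (hp : 0 ≤ p) :
    ENNReal.ofReal (a ^ p) * P {ω | a ≤ |f ω|} ≤ ∫⁻ ω, ENNReal.ofReal (|f ω| ^ p) ∂P := by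
  have hmeas : AEMeasurable (fun ω => ENNReal.ofReal (|f ω| ^ p)) P :=
    (hf.abs.pow_const p).ennreal_ofReal
  refine le_trans ?_ (mul_meas_ge_le_lintegral₀ hmeas (ENNReal.ofReal (a ^ p)))
  refine mul_le_mul_right (measure_mono fun ω (hω : a ≤ |f ω|) => ?_) _
  exact ENNReal.ofReal_le_ofReal (by gcongr)

section EscapeThreshold

open Filter
open scoped Polynomial

/-- The magnitude above which a coefficient of size `|x| ^ α / c` is strong enough for one Euler
step of size `h` to raise `|x|` to the power `(α + 1) / 2`. -/
noncomputable def escapeThreshold (α c h : ℝ) : ℝ :=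
  max (max 2 c) ((2 * c / h) ^ (2 / (α - 1)))

lemma two_le_escapeThreshold (α c h : ℝ) : 2 ≤ escapeThreshold α c h :=
  le_max_of_le_left (le_max_left _ _)

lemma one_le_escapeThreshold (α c h : ℝ) : 1 ≤ escapeThreshold α c h :=
  one_le_two.trans (two_le_escapeThreshold α c h)

lemma le_escapeThreshold (α c h : ℝ) : c ≤ escapeThreshold α c h :=
  le_max_of_le_left (le_max_right _ _)

variable {α c h : ℝ}

lemma rpow_le_mul_rpow_div_sub_of_escapeThreshold_le (hα : 1 < α) (hc : 0 < c) (hh : 0 < h)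
    {x : ℝ} (hx : escapeThreshold α c h ≤ x) :
    x ^ ((α + 1) / 2) ≤ h * (x ^ α / c) - x := by
  have hx1 : 1 ≤ x := (one_le_escapeThreshold α c h).trans hx
  have hx0 : 0 < x := one_pos.trans_le hx1
  have hlarge : 2 * c / h ≤ x ^ ((α - 1) / 2) := by
    rw [← Real.rpow_inv_le_iff_of_pos (by positivity) hx0.le (by linarith), inv_div]
    exact (le_max_right _ _).trans hx
  have hle : x ≤ x ^ ((α + 1) / 2) := Real.self_le_rpow_of_one_le hx1 (by linarith)
  have htwice : 2 * x ^ ((α + 1) / 2) ≤ h * (x ^ α / c) := calc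
    2 * x ^ ((α + 1) / 2) = h * (x ^ ((α + 1) / 2) * (2 * c / h) / c) := by field_simp
    _ ≤ h * (x ^ ((α + 1) / 2) * x ^ ((α - 1) / 2) / c) := by gcongr
    _ = h * (x ^ α / c) := by rw [← Real.rpow_add hx0]; ring_nf
  linarith

lemma rpow_abs_le_abs_add_mul_add_abs_mul (hα : 1 < α) (hc : 0 < c) (hh : 0 < h) {x m s : ℝ}
    (hx : escapeThreshold α c h ≤ |x|) (hms : |x| ^ α / c ≤ |m| + |s|) :
    |x| ^ ((α + 1) / 2) ≤ |x + h * m| + |s| * h := by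
  have hdrift : h * |m| ≤ |x + h * m| + |x| := by
    simpa [abs_mul, abs_of_pos hh] using abs_sub (x + h * m) x
  have hcoeff : h * (|x| ^ α / c) ≤ h * (|m| + |s|) := by gcongr
  have hescape := rpow_le_mul_rpow_div_sub_of_escapeThreshold_le hα hc hh hx
  linarith

lemma exists_polynomial_escapeThreshold_div_le {T : ℝ} (hc : 0 < c) (hT : 0 < T) :
    ∃ Q : ℝ[X], ∀ᶠ N : ℕ in atTop, escapeThreshold α c (T / N) ≤ Q.eval (N : ℝ) := by
  set κ : ℝ := 2 / (α - 1)
  set K : ℝ := (2 * c / T) ^ κ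
  refine ⟨.C 2 + .C c + .C K * .X ^ ⌈κ⌉₊, (eventually_ge_atTop 1).mono fun N hN => ?_⟩
  have hN1 : (1 : ℝ) ≤ N := mod_cast hN
  have hK : 0 ≤ K * (N : ℝ) ^ ⌈κ⌉₊ := by positivity
  have hpow : (2 * c / (T / N)) ^ κ ≤ K * (N : ℝ) ^ ⌈κ⌉₊ := calc
    (2 * c / (T / N)) ^ κ = K * (N : ℝ) ^ κ := by
      rw [← Real.mul_rpow (by positivity) (by positivity)]
      congr 1
      field_simp
    _ ≤ K * (N : ℝ) ^ (⌈κ⌉₊ : ℝ) := by gcongr; exact Nat.le_ceil κ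
    _ = K * (N : ℝ) ^ ⌈κ⌉₊ := by rw [Real.rpow_natCast]
  simp only [Polynomial.eval_add, Polynomial.eval_mul, Polynomial.eval_C, Polynomial.eval_pow,
    Polynomial.eval_X]
  exact max_le (max_le (by linarith) (by linarith)) (by linarith)

end EscapeThreshold

/-- `X 0, …, X N` is the Euler–Maruyama scheme with drift `μ`, diffusion `σ` and step size `h`,
driven by noise `Δ 0, …, Δ (N - 1)` that plays the role of the Brownian increments: `Δ n` is
centered Gaussian of variance `h` and independent of the past `𝒢 n`. -/
structure IsEulerMaruyama {Ω : Type*} {mΩ : MeasurableSpace Ω} (P : Measure Ω)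
    (𝒢 : Filtration ℕ mΩ) (Δ : ℕ → Ω → ℝ) (μ σ : ℝ → ℝ) (h : ℝ) (N : ℕ) (X : ℕ → Ω → ℝ) :
    Prop where
  measurable_zero : Measurable[𝒢 0] (X 0)
  measurable_noise : ∀ n < N, Measurable[𝒢 (n + 1)] (Δ n)
  indep_noise : ∀ n < N, Indep (MeasurableSpace.comap (Δ n) inferInstance) (𝒢 n) P
  map_noise : ∀ n < N, P.map (Δ n) = gaussianReal 0 h.toNNReal
  succ_eq : ∀ n < N, ∀ ω, X (n + 1) ω = X n ω + h * μ (X n ω) + σ (X n ω) * Δ n ω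

namespace IsEulerMaruyama

variable {Ω : Type*} {mΩ : MeasurableSpace Ω} {P : Measure Ω} {𝒢 : Filtration ℕ mΩ}
  {Δ : ℕ → Ω → ℝ} {μ σ : ℝ → ℝ} {h : ℝ} {N n : ℕ} {X : ℕ → Ω → ℝ}

lemma measurable (hX : IsEulerMaruyama P 𝒢 Δ μ σ h N X) (hμ : Measurable μ) (hσ : Measurable σ)
    (hn : n ≤ N) : Measurable[𝒢 n] (X n) := by
  induction n with
  | zero => exact hX.measurable_zero
  | succ n ih =>
    have hXn : Measurable[𝒢 (n + 1)] (X n) := (ih (by omega)).mono (𝒢.mono n.le_succ) le_rfl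
    rw [funext (hX.succ_eq n hn)]
    exact (hXn.add ((hμ.comp hXn).const_mul h)).add ((hσ.comp hXn).mul (hX.measurable_noise n hn))

lemma gaussianTailBound_mul_measure_le_succ (hX : IsEulerMaruyama P 𝒢 Δ μ σ h N X)
    (hμ : Measurable μ) (hσ : Measurable σ) (hh : 0 < h) (hn : n < N) {A : Set Ω}
    (hA : MeasurableSet[𝒢 n] A) {y : ℝ} (hy : 0 ≤ y) :
    gaussianTailBound (y ^ 2 / h) * P A ≤
      P {ω | ω ∈ A ∧ |X n ω + h * μ (X n ω)| + |σ (X n ω)| * y ≤ |X (n + 1) ω|} := by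
  have hXn := hX.measurable hμ hσ hn.le
  have hv : h.toNNReal ≠ 0 := (Real.toNNReal_pos.2 hh).ne'
  have hpos := gaussianTailBound_le_gaussianReal_Ici 0 hv hy
  have hneg := gaussianTailBound_le_gaussianReal_Iic 0 hv hy
  rw [Real.coe_toNNReal _ hh.le, ← hX.map_noise n hn] at hpos hneg
  simp only [hX.succ_eq n hn]
  exact mul_measure_le_measure_abs_add_mul (𝒢.le n)
    ((hX.measurable_noise n hn).mono (𝒢.le (n + 1)) le_rfl) (hX.indep_noise n hn)
    (hXn.add ((hμ.comp hXn).const_mul h)) (hσ.comp hXn) hA hy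
    (by simpa using hpos) (by simpa using hneg)

lemma gaussianTailBound_mul_measure_diffusion_le_succ (hX : IsEulerMaruyama P 𝒢 Δ μ σ h N X)
    (hμ : Measurable μ) (hσ : Measurable σ) (hh : 0 < h) (hn : n < N) {δ R : ℝ} (hδ : 0 < δ)
    (hR : 0 ≤ R) :
    gaussianTailBound ((R / δ) ^ 2 / h) * P {ω | δ ≤ |σ (X n ω)|} ≤ P {ω | R ≤ |X (n + 1) ω|} := by
  have hA : MeasurableSet[𝒢 n] {ω | δ ≤ |σ (X n ω)|} :=
    (measurable_abs.comp (hσ.comp (hX.measurable hμ hσ hn.le))) measurableSet_Ici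
  refine (hX.gaussianTailBound_mul_measure_le_succ hμ hσ hh hn hA (by positivity)).trans
    (measure_mono ?_)
  rintro ω ⟨hω : δ ≤ |σ (X n ω)|, hstep⟩
  calc R = δ * (R / δ) := by field_simp
    _ ≤ |σ (X n ω)| * (R / δ) := by gcongr
    _ ≤ |X n ω + h * μ (X n ω)| + |σ (X n ω)| * (R / δ) := le_add_of_nonneg_left (abs_nonneg _)
    _ ≤ |X (n + 1) ω| := hstep

variable {α c : ℝ}

lemma gaussianTailBound_mul_measure_le_rpow_succ (hX : IsEulerMaruyama P 𝒢 Δ μ σ h N X)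
    (hμ : Measurable μ) (hσ : Measurable σ) (hh : 0 < h) (hα : 1 < α) (hc : 0 < c)
    (hgrowth : ∀ x : ℝ, c ≤ |x| → |x| ^ α / c ≤ |μ x| + |σ x|) (hn : n < N) {R : ℝ}
    (hR : escapeThreshold α c h ≤ R) :
    gaussianTailBound h * P {ω | R ≤ |X n ω|} ≤ P {ω | R ^ ((α + 1) / 2) ≤ |X (n + 1) ω|} := by
  have hA : MeasurableSet[𝒢 n] {ω | R ≤ |X n ω|} :=
    (measurable_abs.comp (hX.measurable hμ hσ hn.le)) measurableSet_Ici
  have hR0 : 0 ≤ R := zero_le_one.trans ((one_le_escapeThreshold α c h).trans hR)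
  have hstep := hX.gaussianTailBound_mul_measure_le_succ hμ hσ hh hn hA hh.le
  rw [sq, mul_self_div_self] at hstep
  refine hstep.trans (measure_mono ?_)
  rintro ω ⟨hω : R ≤ |X n ω|, hnext⟩
  calc R ^ ((α + 1) / 2) ≤ |X n ω| ^ ((α + 1) / 2) := by gcongr
    _ ≤ |X n ω + h * μ (X n ω)| + |σ (X n ω)| * h :=
        rpow_abs_le_abs_add_mul_add_abs_mul hα hc hh (hR.trans hω)
          (hgrowth _ ((le_escapeThreshold α c h).trans (hR.trans hω)))
    _ ≤ |X (n + 1) ω| := hnext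

lemma gaussianTailBound_pow_mul_measure_le_rpow_add (hX : IsEulerMaruyama P 𝒢 Δ μ σ h N X)
    (hμ : Measurable μ) (hσ : Measurable σ) (hh : 0 < h) (hα : 1 < α) (hc : 0 < c)
    (hgrowth : ∀ x : ℝ, c ≤ |x| → |x| ^ α / c ≤ |μ x| + |σ x|) {R : ℝ}
    (hR : escapeThreshold α c h ≤ R) {j : ℕ} (hj : n + j ≤ N) :
    gaussianTailBound h ^ j * P {ω | R ≤ |X n ω|} ≤
      P {ω | R ^ (((α + 1) / 2) ^ j) ≤ |X (n + j) ω|} := by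
  have hR1 : 1 ≤ R := (one_le_escapeThreshold α c h).trans hR
  induction j with
  | zero => simp
  | succ j ih =>
    have hRj : escapeThreshold α c h ≤ R ^ (((α + 1) / 2) ^ j) :=
      hR.trans (Real.self_le_rpow_of_one_le hR1 (one_le_pow₀ (by linarith)))
    calc gaussianTailBound h ^ (j + 1) * P {ω | R ≤ |X n ω|}
        = gaussianTailBound h * (gaussianTailBound h ^ j * P {ω | R ≤ |X n ω|}) := by
          rw [pow_succ', mul_assoc]
      _ ≤ gaussianTailBound h * P {ω | R ^ (((α + 1) / 2) ^ j) ≤ |X (n + j) ω|} := by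
          gcongr
          exact ih (by omega)
      _ ≤ P {ω | (R ^ (((α + 1) / 2) ^ j)) ^ ((α + 1) / 2) ≤ |X (n + j + 1) ω|} :=
          hX.gaussianTailBound_mul_measure_le_rpow_succ hμ hσ hh hα hc hgrowth hj hRj
      _ = P {ω | R ^ (((α + 1) / 2) ^ (j + 1)) ≤ |X (n + (j + 1)) ω|} := by
          rw [← Real.rpow_mul (by linarith), ← pow_succ, add_assoc]

lemma ofReal_exp_mul_measure_le_lintegral (hX : IsEulerMaruyama P 𝒢 Δ μ σ h N X)
    (hμ : Measurable μ) (hσ : Measurable σ) (hh : 0 < h) (hα : 1 < α) (hc : 0 < c)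
    (hgrowth : ∀ x : ℝ, c ≤ |x| → |x| ^ α / c ≤ |μ x| + |σ x|) {p : ℝ} (hp : 0 ≤ p) {j : ℕ}
    (hj : n + j ≤ N) :
    ENNReal.ofReal (rexp (p * Real.log 2 * ((α + 1) / 2) ^ j)) *
        (gaussianTailBound h ^ j * P {ω | escapeThreshold α c h ≤ |X n ω|}) ≤
      ∫⁻ ω, ENNReal.ofReal (|X (n + j) ω| ^ p) ∂P := by
  have hexp : rexp (p * Real.log 2 * ((α + 1) / 2) ^ j) = (2 ^ (((α + 1) / 2) ^ j)) ^ p := by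
    rw [← Real.rpow_mul zero_le_two, Real.rpow_def_of_pos two_pos]
    ring_nf
  have hXj : Measurable (X (n + j)) := (hX.measurable hμ hσ hj).mono (𝒢.le _) le_rfl
  rw [hexp]
  refine le_trans ?_ (ofReal_rpow_mul_measure_le_lintegral_abs_rpow hXj.aemeasurable
    (a := 2 ^ (((α + 1) / 2) ^ j)) (by positivity) hp)
  gcongr
  refine (hX.gaussianTailBound_pow_mul_measure_le_rpow_add hμ hσ hh hα hc hgrowth le_rfl hj).trans
    (measure_mono fun ω hω => ?_)
  exact (Real.rpow_le_rpow zero_le_two (two_le_escapeThreshold α c h)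
    (by positivity)).trans hω

end IsEulerMaruyama

section Divergence

open Filter
open scoped Polynomial Topology

variable {Ω : Type*} {mΩ : MeasurableSpace Ω} {P : Measure Ω} {𝒢 : ℕ → Filtration ℕ mΩ}
  {Δ : ℕ → ℕ → Ω → ℝ} {μ σ : ℝ → ℝ} {T : ℝ} {ξ : Ω → ℝ} {Y : ℕ → ℕ → Ω → ℝ}

lemma exists_pos_measure_le_abs_ne_zero {f : Ω → ℝ} (hf : 0 < P {ω | f ω ≠ 0}) :
    ∃ δ > 0, P {ω | δ ≤ |f ω|} ≠ 0 := by
  by_contra! hnull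
  have hcover : {ω | f ω ≠ 0} ⊆ ⋃ K : ℕ, {ω | 1 / ((K : ℝ) + 1) ≤ |f ω|} := fun ω hω =>
    Set.mem_iUnion.2 ((exists_nat_one_div_lt (abs_pos.2 hω)).imp fun _ hK => hK.le)
  exact hf.ne' (measure_mono_null hcover (measure_iUnion_null fun K => hnull _ (by positivity)))

lemma IsEulerMaruyama.hasExpPolyLowerBound_of_diffusion_ne_zero (hT : 0 < T) (hμ : Measurable μ)
    (hσ : Measurable σ)
    (hY : ∀ N, 1 ≤ N → IsEulerMaruyama P (𝒢 N) (Δ N) μ σ (T / N) N (Y N))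
    (hY0 : ∀ N, 1 ≤ N → Y N 0 = ξ) (hξ : 0 < P {ω | σ (ξ ω) ≠ 0}) {r : ℕ → ℝ}
    (hr : ∀ᶠ N in atTop, 0 ≤ r N) {Q : ℝ[X]} (hrQ : ∀ᶠ N : ℕ in atTop, r N ≤ Q.eval (N : ℝ)) :
    HasExpPolyLowerBound fun N => P {ω | r N ≤ |Y N 1 ω|} := by
  obtain ⟨δ, hδ, hmeas⟩ := exists_pos_measure_le_abs_ne_zero hξ
  refine ((hasExpPolyLowerBound_gaussianTailBound_eval (.C (δ ^ 2 * T)⁻¹ * (Q ^ 2 * .X))).mul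
    (.const hmeas)).mono ?_
  filter_upwards [hr, hrQ, eventually_ge_atTop 1] with N hr0 hrN hN
  have hTN : 0 < T / N := div_pos hT (mod_cast hN)
  have hz : (r N / δ) ^ 2 / (T / N) ≤
      (.C (δ ^ 2 * T)⁻¹ * (Q ^ 2 * .X) : ℝ[X]).eval (N : ℝ) := calc
    (r N / δ) ^ 2 / (T / N) = (δ ^ 2 * T)⁻¹ * (r N ^ 2 * N) := by field_simp
    _ ≤ (δ ^ 2 * T)⁻¹ * (Q.eval (N : ℝ) ^ 2 * N) := by gcongr
    _ = _ := by simp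
  have hstep := (hY N hN).gaussianTailBound_mul_measure_diffusion_le_succ hμ hσ hTN hN hδ hr0
  rw [hY0 N hN] at hstep
  exact (mul_le_mul_left (gaussianTailBound_antitone hz) _).trans hstep

lemma IsEulerMaruyama.hasExpPolyLowerBound_of_tail {α β c : ℝ} (hα : 1 < α) (hβ : 1 ≤ β)
    (hc : 0 < c) (hT : 0 < T) (hμ : Measurable μ) (hσ : Measurable σ)
    (hY : ∀ N, 1 ≤ N → IsEulerMaruyama P (𝒢 N) (Δ N) μ σ (T / N) N (Y N))
    (hY0 : ∀ N, 1 ≤ N → Y N 0 = ξ)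
    (hgrowth : ∀ x : ℝ, c ≤ |x| → |x| ^ α / c ≤ |μ x| + |σ x|)
    (htail : ∀ x : ℝ, 1 ≤ x → ENNReal.ofReal (β ^ (-(x ^ β))) ≤ P {ω | x ≤ |ξ ω|}) :
    HasExpPolyLowerBound fun N => P {ω | escapeThreshold α c (T / N) ≤ |Y N 1 ω|} := by
  obtain ⟨Q, hQ⟩ := exists_polynomial_escapeThreshold_div_le (α := α) hc hT
  refine ((HasExpPolyLowerBound.const (gaussianTailBound_ne_zero T)).mul
    (hasExpPolyLowerBound_measure_of_tail hβ htail
      (.of_forall fun N => one_le_escapeThreshold α c (T / N)) hQ)).mono ?_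
  filter_upwards [eventually_ge_atTop 1] with N hN
  have hTN : 0 < T / N := div_pos hT (mod_cast hN)
  have hstep := (hY N hN).gaussianTailBound_mul_measure_le_rpow_succ hμ hσ hTN hα hc hgrowth hN
    le_rfl
  rw [hY0 N hN] at hstep
  refine (mul_le_mul_left (gaussianTailBound_antitone (div_le_self hT.le (mod_cast hN))) _).trans
    (hstep.trans (measure_mono fun ω hω => ?_))
  exact (Real.self_le_rpow_of_one_le (one_le_escapeThreshold α c (T / N)) (by linarith)).trans hω

theorem euler_maruyama_divergence_general {α β c p : ℝ} (hα : 1 < α) (hβ : 1 ≤ β) (hc : 0 < c)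
    (hT : 0 < T) (hμ : Measurable μ) (hσ : Measurable σ)
    (hY : ∀ N, 1 ≤ N → IsEulerMaruyama P (𝒢 N) (Δ N) μ σ (T / N) N (Y N))
    (hY0 : ∀ N, 1 ≤ N → Y N 0 = ξ)
    (hgrowth : ∀ x : ℝ, c ≤ |x| → |x| ^ α / c ≤ |μ x| + |σ x|)
    (hinit : 0 < P {ω | σ (ξ ω) ≠ 0} ∨
      ∀ x : ℝ, 1 ≤ x → ENNReal.ofReal (β ^ (-(x ^ β))) ≤ P {ω | x ≤ |ξ ω|})
    (hp : 0 < p) :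
    Tendsto (fun N : ℕ => ∫⁻ ω, ENNReal.ofReal (|Y N N ω| ^ p) ∂P) atTop (𝓝 ⊤) := by
  have hfirst : HasExpPolyLowerBound fun N =>
      P {ω | escapeThreshold α c (T / N) ≤ |Y N 1 ω|} := by
    obtain ⟨Q, hQ⟩ := exists_polynomial_escapeThreshold_div_le (α := α) hc hT
    refine hinit.elim (fun hξ => ?_) fun htail =>
      IsEulerMaruyama.hasExpPolyLowerBound_of_tail hα hβ hc hT hμ hσ hY hY0 hgrowth htail
    exact IsEulerMaruyama.hasExpPolyLowerBound_of_diffusion_ne_zero hT hμ hσ hY hY0 hξ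
      (.of_forall fun N => zero_le_two.trans (two_le_escapeThreshold α c (T / N))) hQ
  have hγ : 1 < (α + 1) / 2 := by linarith
  have hδ : 0 < p * Real.log 2 / ((α + 1) / 2) := by positivity
  refine tendsto_nhds_top_mono
    (((HasExpPolyLowerBound.pow_sub_one (gaussianTailBound_ne_zero T)).mul
      hfirst).tendsto_ofReal_exp_pow_mul hδ hγ) ?_
  filter_upwards [eventually_ge_atTop 1] with N hN
  have hTN : 0 < T / N := div_pos hT (mod_cast hN)
  have hexponent : p * Real.log 2 / ((α + 1) / 2) * ((α + 1) / 2) ^ N =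
      p * Real.log 2 * ((α + 1) / 2) ^ (N - 1) := by
    obtain ⟨M, rfl⟩ := Nat.exists_eq_add_of_le' hN
    rw [Nat.add_sub_cancel, pow_succ]
    field_simp
  have hmoment := (hY N hN).ofReal_exp_mul_measure_le_lintegral hμ hσ hTN hα hc hgrowth hp.le
    (Nat.add_sub_cancel' hN).le
  rw [Nat.add_sub_cancel' hN] at hmoment
  rw [hexponent]
  refine le_trans ?_ hmoment
  gcongr
  exact gaussianTailBound_antitone (div_le_self hT.le (mod_cast hN))

end Divergence

section GaussianIncrements

/-- The filtration `ℱ` observed at the times `t k`. -/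
def filtrationComp {Ω ι κ : Type*} [Preorder ι] [Preorder κ] {mΩ : MeasurableSpace Ω}
    (ℱ : Filtration ι mΩ) {t : κ → ι} (ht : Monotone t) : Filtration κ mΩ where
  seq k := ℱ (t k)
  mono' _ _ hkl := ℱ.mono (ht hkl)
  le' k := ℱ.le (t k)

lemma monotone_natCast_mul_div {T : ℝ} (hT : 0 ≤ T) (N : ℕ) :
    Monotone fun n : ℕ => (n : ℝ) * T / N := fun m n hmn => by
  beta_reduce
  gcongr

lemma isEulerMaruyama_of_gaussian_increments {Ω : Type*} {mΩ : MeasurableSpace Ω} {P : Measure Ω}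
    {T : ℝ} (hT : 0 ≤ T) {ℱ : Filtration ℝ mΩ} {W : ℝ → Ω → ℝ}
    (hWadapted : ∀ t ∈ Set.Icc (0 : ℝ) T, Measurable[ℱ t] (W t))
    (hWindep : ∀ s t : ℝ, 0 ≤ s → s ≤ t → t ≤ T →
        Indep (MeasurableSpace.comap (fun ω => W t ω - W s ω) inferInstance) (ℱ s) P)
    (hWlaw : ∀ s t : ℝ, 0 ≤ s → s ≤ t → t ≤ T →
        P.map (fun ω => W t ω - W s ω) = gaussianReal 0 (Real.toNNReal (t - s)))
    {μ σ : ℝ → ℝ} {N : ℕ} {X : ℕ → Ω → ℝ} (hX0 : Measurable[ℱ 0] (X 0))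
    (hXrec : ∀ n < N, ∀ ω, X (n + 1) ω = X n ω + (T / N) * μ (X n ω)
        + σ (X n ω) * (W ((n + 1) * T / N) ω - W (n * T / N) ω)) :
    IsEulerMaruyama P (filtrationComp ℱ (monotone_natCast_mul_div hT N))
      (fun n ω => W ((n + 1) * T / N) ω - W (n * T / N) ω) μ σ (T / N) N X := by
  have hgrid {n : ℕ} (hn : n < N) : 0 ≤ (n : ℝ) * T / N ∧
      (n : ℝ) * T / N ≤ (n + 1) * T / N ∧ (n + 1) * T / N ≤ T := by
    have hN : (0 : ℝ) < N := mod_cast n.zero_le.trans_lt hn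
    have hn' : (n : ℝ) + 1 ≤ N := mod_cast hn
    refine ⟨by positivity, by gcongr; linarith, ?_⟩
    rw [div_le_iff₀ hN, mul_comm T]
    gcongr
  refine ⟨?_, fun n hn => ?_, fun n hn => ?_, fun n hn => ?_, hXrec⟩
  · exact hX0.mono (ℱ.mono (by simp)) le_rfl
  · obtain ⟨h0, hle, hT'⟩ := hgrid hn
    have hnext := (hWadapted _ ⟨h0.trans hle, hT'⟩).sub
      ((hWadapted _ ⟨h0, hle.trans hT'⟩).mono (ℱ.mono hle) le_rfl)
    exact hnext.mono (ℱ.mono (by push_cast; rfl)) le_rfl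
  · obtain ⟨h0, hle, hT'⟩ := hgrid hn
    exact hWindep _ _ h0 hle hT'
  · obtain ⟨h0, hle, hT'⟩ := hgrid hn
    rw [hWlaw _ _ h0 hle hT']
    ring_nf

end GaussianIncrements

/-- Strong and numerically weak divergence of the Euler–Maruyama scheme for one-dimensional
SODEs with superlinearly growing coefficients (Theorem 2.1 of Hutzenthaler–Jentzen–Kloeden):
if `|μ(x)| + |σ(x)| ≥ |x|^α / c` outside `[-c, c]` and the initial value satisfies the stated
nondegeneracy condition, then the `p`-th absolute moments of the Euler approximations diverge
to infinity for every `p > 0`. -/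
theorem euler_maruyama_divergence
    {Ω : Type*} [mΩ : MeasurableSpace Ω] (P : Measure Ω) [IsProbabilityMeasure P]
    (α β c T : ℝ) (hα : 1 < α) (hβ : 1 < β) (hc : 1 < c) (hT : 0 < T)
    (ℱ : Filtration ℝ mΩ) (W : ℝ → Ω → ℝ)
    (hWadapted : ∀ t ∈ Set.Icc (0 : ℝ) T, Measurable[ℱ t] (W t))
    (hWcont : ∀ ω, ContinuousOn (fun t => W t ω) (Set.Icc (0 : ℝ) T))
    (hW0 : ∀ ω, W 0 ω = 0)
    (hWindep : ∀ s t : ℝ, 0 ≤ s → s ≤ t → t ≤ T →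
        Indep (MeasurableSpace.comap (fun ω => W t ω - W s ω) inferInstance) (ℱ s) P)
    (hWlaw : ∀ s t : ℝ, 0 ≤ s → s ≤ t → t ≤ T →
        P.map (fun ω => W t ω - W s ω) = gaussianReal 0 (Real.toNNReal (t - s)))
    (ξ : Ω → ℝ) (hξ : Measurable[ℱ 0] ξ)
    (μ σ : ℝ → ℝ) (hμ : Measurable μ) (hσ : Measurable σ)
    (Y : ℕ → ℕ → Ω → ℝ)
    (hY0 : ∀ N : ℕ, 1 ≤ N → Y N 0 = ξ)
    (hYrec : ∀ N : ℕ, 1 ≤ N → ∀ n < N, ∀ ω,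
        Y N (n + 1) ω = Y N n ω + (T / N) * μ (Y N n ω)
          + σ (Y N n ω) * (W ((n + 1) * T / N) ω - W (n * T / N) ω))
    (hgrowth : ∀ x : ℝ, (x ≤ -c ∨ c ≤ x) → |x| ^ α / c ≤ |μ x| + |σ x|)
    (hinit : 0 < P {ω | σ (ξ ω) ≠ 0} ∨
      ∀ x : ℝ, 1 ≤ x → ENNReal.ofReal (β ^ (-(x ^ β))) ≤ P {ω | x ≤ |ξ ω|})
    (p : ℝ) (hp : 0 < p) :
    Filter.Tendsto (fun N : ℕ => ∫⁻ ω, ENNReal.ofReal (|Y N N ω| ^ p) ∂P)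
      Filter.atTop (nhds ⊤) :=
  euler_maruyama_divergence_general hα hβ.le (by linarith) hT hμ hσ
    (fun N hN => isEulerMaruyama_of_gaussian_increments hT.le hWadapted hWindep hWlaw
      ((hY0 N hN).symm ▸ hξ) (hYrec N hN)) hY0 (fun x hx => hgrowth x (le_abs'.1 hx)) hinit hp
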